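/- For every j with 0 ≤ j ≤ n, every α ∈ ℝ and every C^∞ function f on X one has (L − α σ_j) f = e^{α R_j} \bar{L}_α ( e^{−α R_j} f ), where \bar{L}_α = L + γ Σ_{i∈{1,n}} ( 2α r_i·∇_{r_i} − (α − α²) T_i^{−1} |r_i|² ) + 2 d γ α (the last two terms acting as multiplication operators). In particular all the operators L − α σ_j, 0 ≤ j ≤ n, are conjugate to the same operator \bar{L}_α, which does not depend on j. -/

import Mathlib

open scoped BigOperators

noncomputable section

/-- `Vc d` : vectors in ℝ^d. -/
abbrev Vc (d : ℕ) := Fin d → ℝ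
/-- Configurations of `m` oscillators. -/
abbrev Cfg (m d : ℕ) := Fin m → Vc d
/-- Phase space X = p × q × r₁ × rₙ (for a chain of `m` oscillators). -/
abbrev Phs (m d : ℕ) := Cfg m d × Cfg m d × Vc d × Vc d

variable {m d : ℕ}

/-- unit coordinate vector in the p-block -/
def eP (i : Fin m) (a : Fin d) : Phs m d := (Pi.single i (Pi.single a 1), 0, 0, 0)
/-- unit coordinate vector in the q-block -/
def eQ (i : Fin m) (a : Fin d) : Phs m d := (0, Pi.single i (Pi.single a 1), 0, 0)
/-- unit coordinate vector in the r₁-block -/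
def eR1 (a : Fin d) : Phs m d := (0, 0, Pi.single a 1, 0)
/-- unit coordinate vector in the rₙ-block -/
def eRn (a : Fin d) : Phs m d := (0, 0, 0, Pi.single a 1)

/-- directional (partial) derivative -/
def PD (f : Phs m d → ℝ) (x v : Phs m d) : ℝ := fderiv ℝ f x v

variable {n : ℕ}

/-- total potential V(q) = Σᵢ U⁽¹⁾(qᵢ) + Σᵢ U⁽²⁾(qᵢ − qᵢ₊₁) of a chain of n+2 oscillators -/
def Vtot (U1 U2 : Vc d → ℝ) (q : Cfg (n+2) d) : ℝ :=
  (∑ i, U1 (q i)) + ∑ i : Fin (n+1), U2 (q i.castSucc - q i.succ)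

/-- the generator L of the dynamics of the chain coupled to two reservoirs -/
def gen (γ lam T1 Tn : ℝ) (U1 U2 : Vc d → ℝ) (f : Phs (n+2) d → ℝ) (x : Phs (n+2) d) : ℝ :=
  (γ * (T1 * ∑ a, PD (fun y => PD f y (eR1 a)) x (eR1 a)
        - ∑ a, x.2.2.1 a * PD f x (eR1 a))
    + lam * ((∑ a, x.1 0 a * PD f x (eR1 a)) - ∑ a, x.2.2.1 a * PD f x (eP 0 a)))
  + (γ * (Tn * ∑ a, PD (fun y => PD f y (eRn a)) x (eRn a)
        - ∑ a, x.2.2.2 a * PD f x (eRn a))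
    + lam * ((∑ a, x.1 (Fin.last (n+1)) a * PD f x (eRn a))
        - ∑ a, x.2.2.2 a * PD f x (eP (Fin.last (n+1)) a)))
  + ∑ i, ((∑ a, x.1 i a * PD f x (eQ i a))
        - ∑ a, fderiv ℝ (Vtot U1 U2) x.2.1 (Pi.single i (Pi.single a 1)) * PD f x (eP i a))

/-- nat-indexed access to the oscillator coordinates (junk value outside the range) -/
def cfgNat (q : Cfg (n+2) d) (k : ℕ) : Vc d := if h : k < n + 2 then q ⟨k, h⟩ else 0

/-- local energies H_k, 0-indexed: k ∈ {0, …, n+1} -/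
def Hloc (U1 U2 : Vc d → ℝ) (k : ℕ) (x : Phs (n+2) d) : ℝ :=
  (∑ a, (cfgNat x.1 k a) ^ 2) / 2 + U1 (cfgNat x.2.1 k)
  + (if k = 0 then 0 else (1/2) * U2 (cfgNat x.2.1 (k-1) - cfgNat x.2.1 k))
  + (if k = n + 1 then 0 else (1/2) * U2 (cfgNat x.2.1 k - cfgNat x.2.1 (k+1)))

/-- heat flows Φ_j, j ∈ {0, …, n+2}: Φ_0 = −λr₁·p_0 is the flow from the left
reservoir into the chain, Φ_{n+2} = λrₙ·p_{n+1} the flow into the right reservoir,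
and for 1 ≤ j ≤ n+1, Φ_j is the flow from the (0-indexed) oscillator j−1 to the
oscillator j. -/
def heatFlow (lam : ℝ) (U2 : Vc d → ℝ) (j : ℕ) (x : Phs (n+2) d) : ℝ :=
  if j = 0 then - lam * ∑ a, x.2.2.1 a * x.1 0 a
  else if j = n + 2 then lam * ∑ a, x.2.2.2 a * x.1 (Fin.last (n+1)) a
  else ∑ a, ((cfgNat x.1 (j-1) a + cfgNat x.1 j a) / 2)
        * fderiv ℝ U2 (cfgNat x.2.1 (j-1) - cfgNat x.2.1 j) (Pi.single a 1)

/-- entropy production σ_j = (1/Tₙ − 1/T₁) Φ_j -/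
def sigmaEP (lam T1 Tn : ℝ) (U2 : Vc d → ℝ) (j : ℕ) (x : Phs (n+2) d) : ℝ :=
  (1 / Tn - 1 / T1) * heatFlow lam U2 j x

/-- two-temperatures Gibbs exponent R_j, j ∈ {0, …, n+2}: the first j oscillators
are weighted with 1/T₁, the remaining ones with 1/Tₙ. -/
def Rj (T1 Tn : ℝ) (U1 U2 : Vc d → ℝ) (j : ℕ) (x : Phs (n+2) d) : ℝ :=
  (1 / T1) * ((∑ a, (x.2.2.1 a) ^ 2) / 2 + ∑ k ∈ Finset.range j, Hloc U1 U2 k x)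
  + (1 / Tn) * ((∑ k ∈ Finset.Ico j (n+2), Hloc U1 U2 k x) + (∑ a, (x.2.2.2 a) ^ 2) / 2)

/-- the operator `L̄_α = L + γ Σ_{i∈{1,n}} (2α rᵢ·∇_{rᵢ} − (α−α²) Tᵢ⁻¹ |rᵢ|²) + 2dγα` -/
def barL (γ lam T1 Tn : ℝ) (U1 U2 : Vc d → ℝ) (α : ℝ)
    (h : Phs (n+2) d → ℝ) (x : Phs (n+2) d) : ℝ :=
  gen γ lam T1 Tn U1 U2 h x
  + γ * (2 * α * (∑ a, x.2.2.1 a * PD h x (eR1 a))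
          - (α - α ^ 2) * T1⁻¹ * (∑ a, (x.2.2.1 a) ^ 2) * h x)
  + γ * (2 * α * (∑ a, x.2.2.2 a * PD h x (eRn a))
          - (α - α ^ 2) * Tn⁻¹ * (∑ a, (x.2.2.2 a) ^ 2) * h x)
  + 2 * (d : ℝ) * γ * α * h x

/-- coordinate access as a continuous linear map -/
def cN (k : ℕ) : Cfg (n+2) d →L[ℝ] Vc d :=
  if h : k < n + 2 then ContinuousLinearMap.proj (R := ℝ) (φ := fun _ : Fin (n+2) => Vc d) ⟨k, h⟩ else 0

theorem cfgNat_eq (q : Cfg (n+2) d) (k : ℕ) : cfgNat q k = cN k q := by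
  unfold cfgNat cN
  split_ifs <;> rfl

theorem clm_sum (D : Vc d →L[ℝ] ℝ) (v : Vc d) : D v = ∑ a, v a * D (Pi.single a 1) := by
  conv_lhs => rw [pi_eq_sum_univ' v]
  rw [map_sum]
  refine Finset.sum_congr rfl fun a _ => ?_
  rw [map_smul, smul_eq_mul]

/-- derivative formula for local energies -/
def dH (U1 U2 : Vc d → ℝ) (k : ℕ) (x v : Phs (n+2) d) : ℝ :=
  (∑ a, cN k x.1 a * cN k v.1 a) + fderiv ℝ U1 (cN k x.2.1) (cN k v.2.1)
  + (if k = 0 then 0 else (1/2) * fderiv ℝ U2 (cN (k-1) x.2.1 - cN k x.2.1)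
        (cN (k-1) v.2.1 - cN k v.2.1))
  + (if k = n + 1 then 0 else (1/2) * fderiv ℝ U2 (cN k x.2.1 - cN (k+1) x.2.1)
        (cN k v.2.1 - cN (k+1) v.2.1))

theorem Hloc_contDiff (U1 U2 : Vc d → ℝ) (hU1 : ContDiff ℝ (⊤ : ℕ∞) U1)
    (hU2 : ContDiff ℝ (⊤ : ℕ∞) U2) (k : ℕ) :
    ContDiff ℝ (⊤ : ℕ∞) (Hloc (n := n) U1 U2 k) := by
  unfold Hloc
  simp only [cfgNat_eq]
  split_ifs <;> fun_prop

theorem line_deriv {E : Type*} [NormedAddCommGroup E] [NormedSpace ℝ E] (f : E → ℝ) (x v : E)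
    (hf : DifferentiableAt ℝ f x) (c : ℝ)
    (h : HasDerivAt (fun t : ℝ => f (x + t • v)) c 0) : fderiv ℝ f x v = c := by
  have h1 := hf.hasFDerivAt.hasLineDerivAt v
  exact h1.unique h

theorem line_comp {E F : Type*} [NormedAddCommGroup E] [NormedSpace ℝ E]
    [NormedAddCommGroup F] [NormedSpace ℝ F] (U : F → ℝ) (hU : Differentiable ℝ U)
    (ℓ : E →L[ℝ] F) (x v : E) :
    HasDerivAt (fun t : ℝ => U (ℓ (x + t • v))) (fderiv ℝ U (ℓ x) (ℓ v)) 0 := by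
  have h1 := (hU (ℓ x)).hasFDerivAt.hasLineDerivAt (ℓ v)
  unfold HasLineDerivAt at h1
  simpa using h1

theorem line_sq (w u : Vc d) :
    HasDerivAt (fun t : ℝ => (∑ a, ((w + t • u) a) ^ 2) / 2) (∑ a, w a * u a) 0 := by
  have : HasDerivAt (fun t : ℝ => (∑ a, ((w + t • u) a) ^ 2) / 2)
      ((∑ a, 2 * w a * u a) / 2) 0 := by
    refine HasDerivAt.div_const (HasDerivAt.fun_sum fun a _ => ?_) 2
    have h := ((((hasDerivAt_id (0:ℝ)).mul_const (u a)).const_add (w a)).fun_pow 2)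
    simpa using h
  convert this using 1
  rw [Finset.sum_div]
  refine Finset.sum_congr rfl fun a _ => ?_
  ring

theorem Hloc_PD (U1 U2 : Vc d → ℝ) (hU1 : ContDiff ℝ (⊤ : ℕ∞) U1)
    (hU2 : ContDiff ℝ (⊤ : ℕ∞) U2) (k : ℕ) (x v : Phs (n+2) d) :
    PD (Hloc U1 U2 k) x v = dH U1 U2 k x v := by
  have d1 : Differentiable ℝ U1 := hU1.differentiable (by simp)
  have d2 : Differentiable ℝ U2 := hU2.differentiable (by simp)
  refine line_deriv _ _ _ ((Hloc_contDiff U1 U2 hU1 hU2 k).differentiable (by simp) x) _ ?_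
  unfold Hloc dH
  simp only [cfgNat_eq]
  refine HasDerivAt.fun_add (HasDerivAt.fun_add (HasDerivAt.fun_add ?_ ?_) ?_) ?_
  · simpa using line_sq (cN k x.1) (cN k v.1)
  · simpa using line_comp U1 d1 (cN k) x.2.1 v.2.1
  · split_ifs
    · exact hasDerivAt_const _ _
    · exact (line_comp U2 d2 (cN (n := n) (k-1) - cN k) x.2.1 v.2.1).const_mul (1/2)
  · split_ifs
    · exact hasDerivAt_const _ _
    · exact (line_comp U2 d2 (cN (n := n) k - cN (k+1)) x.2.1 v.2.1).const_mul (1/2)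

theorem Rj_contDiff (T1 Tn : ℝ) (U1 U2 : Vc d → ℝ) (hU1 : ContDiff ℝ (⊤ : ℕ∞) U1)
    (hU2 : ContDiff ℝ (⊤ : ℕ∞) U2) (j : ℕ) :
    ContDiff ℝ (⊤ : ℕ∞) (Rj (n := n) T1 Tn U1 U2 j) := by
  have h := Hloc_contDiff (n := n) U1 U2 hU1 hU2
  unfold Rj
  fun_prop

theorem Rj_PD (T1 Tn : ℝ) (U1 U2 : Vc d → ℝ) (hU1 : ContDiff ℝ (⊤ : ℕ∞) U1)
    (hU2 : ContDiff ℝ (⊤ : ℕ∞) U2) (j : ℕ) (x v : Phs (n+2) d) :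
    PD (Rj T1 Tn U1 U2 j) x v =
      (1 / T1) * ((∑ a, x.2.2.1 a * v.2.2.1 a) + ∑ k ∈ Finset.range j, dH U1 U2 k x v)
      + (1 / Tn) * ((∑ k ∈ Finset.Ico j (n+2), dH U1 U2 k x v) + ∑ a, x.2.2.2 a * v.2.2.2 a) := by
  refine line_deriv _ _ _ ((Rj_contDiff T1 Tn U1 U2 hU1 hU2 j).differentiable (by simp) x) _ ?_
  have hH : ∀ k, HasDerivAt (fun t : ℝ => Hloc U1 U2 k (x + t • v)) (dH U1 U2 k x v) 0 := by
    intro k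
    rw [← Hloc_PD U1 U2 hU1 hU2]
    exact ((Hloc_contDiff U1 U2 hU1 hU2 k).differentiable (by simp) x).hasFDerivAt.hasLineDerivAt v
  unfold Rj
  refine HasDerivAt.fun_add (HasDerivAt.const_mul _ (HasDerivAt.fun_add ?_ ?_))
    (HasDerivAt.const_mul _ (HasDerivAt.fun_add ?_ ?_))
  · exact line_sq x.2.2.1 v.2.2.1
  · exact HasDerivAt.fun_sum fun k _ => hH k
  · exact HasDerivAt.fun_sum fun k _ => hH k
  · exact line_sq x.2.2.2 v.2.2.2

theorem Rj_PD_R1 (T1 Tn : ℝ) (U1 U2 : Vc d → ℝ) (hU1 : ContDiff ℝ (⊤ : ℕ∞) U1)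
    (hU2 : ContDiff ℝ (⊤ : ℕ∞) U2) (j : ℕ) (x : Phs (n+2) d) (a : Fin d) :
    PD (Rj T1 Tn U1 U2 j) x (eR1 a) = (1 / T1) * x.2.2.1 a := by
  rw [Rj_PD T1 Tn U1 U2 hU1 hU2]
  simp [eR1, dH, Pi.single_apply]

theorem Rj_PD_Rn (T1 Tn : ℝ) (U1 U2 : Vc d → ℝ) (hU1 : ContDiff ℝ (⊤ : ℕ∞) U1)
    (hU2 : ContDiff ℝ (⊤ : ℕ∞) U2) (j : ℕ) (x : Phs (n+2) d) (a : Fin d) :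
    PD (Rj T1 Tn U1 U2 j) x (eRn a) = (1 / Tn) * x.2.2.2 a := by
  rw [Rj_PD T1 Tn U1 U2 hU1 hU2]
  simp [eRn, dH, Pi.single_apply]

/-- the Hamiltonian part of the vector field -/
def HW (lam : ℝ) (U1 U2 : Vc d → ℝ) (x : Phs (n+2) d) : Phs (n+2) d :=
  (fun i a => - fderiv ℝ (Vtot U1 U2) x.2.1 (Pi.single i (Pi.single a 1))
      - (if i = 0 then lam * x.2.2.1 a else 0)
      - (if i = Fin.last (n+1) then lam * x.2.2.2 a else 0),
    x.1, lam • x.1 0, lam • x.1 (Fin.last (n+1)))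

theorem vec_decomp (v : Phs (n+2) d) :
    v = (∑ i, ∑ a, v.1 i a • eP i a) + (∑ i, ∑ a, v.2.1 i a • eQ i a)
      + (∑ a, v.2.2.1 a • eR1 a) + (∑ a, v.2.2.2 a • eRn a) := by
  refine Prod.ext ?_ (Prod.ext ?_ (Prod.ext ?_ ?_))
  · simp only [Prod.fst_add, Prod.fst_sum, Prod.smul_fst, eP, eQ, eR1, eRn]
    ext i a
    simp [Finset.sum_apply, Pi.single_apply, ite_apply]
  · simp only [Prod.fst_add, Prod.fst_sum, Prod.smul_fst, Prod.snd_add, Prod.snd_sum,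
      Prod.smul_snd, eP, eQ, eR1, eRn]
    ext i a
    simp [Finset.sum_apply, Pi.single_apply, ite_apply]
  · simp only [Prod.fst_add, Prod.fst_sum, Prod.smul_fst, Prod.snd_add, Prod.snd_sum,
      Prod.smul_snd, eP, eQ, eR1, eRn]
    ext a
    simp [Finset.sum_apply, Pi.single_apply]
  · simp only [Prod.fst_add, Prod.fst_sum, Prod.smul_fst, Prod.snd_add, Prod.snd_sum,
      Prod.smul_snd, eP, eQ, eR1, eRn]
    ext a
    simp [Finset.sum_apply, Pi.single_apply]

theorem PD_decomp (f : Phs (n+2) d → ℝ) (x v : Phs (n+2) d) :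
    PD f x v = (∑ i, ∑ a, v.1 i a * PD f x (eP i a)) + (∑ i, ∑ a, v.2.1 i a * PD f x (eQ i a))
      + (∑ a, v.2.2.1 a * PD f x (eR1 a)) + (∑ a, v.2.2.2 a * PD f x (eRn a)) := by
  unfold PD
  conv_lhs => rw [vec_decomp v]
  simp only [map_add, map_sum, map_smul, smul_eq_mul]

theorem gen_eq (γ lam T1 Tn : ℝ) (U1 U2 : Vc d → ℝ) (f : Phs (n+2) d → ℝ) (x : Phs (n+2) d) :
    gen γ lam T1 Tn U1 U2 f x =
      γ * (T1 * ∑ a, PD (fun y => PD f y (eR1 a)) x (eR1 a)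
        - ∑ a, x.2.2.1 a * PD f x (eR1 a))
      + γ * (Tn * ∑ a, PD (fun y => PD f y (eRn a)) x (eRn a)
        - ∑ a, x.2.2.2 a * PD f x (eRn a))
      + PD f x (HW lam U1 U2 x) := by
  rw [PD_decomp f x (HW lam U1 U2 x)]
  unfold gen HW
  simp only [sub_mul, Finset.sum_sub_distrib, neg_mul, Finset.sum_neg_distrib, ite_mul, zero_mul,
    Pi.smul_apply, smul_eq_mul, mul_assoc, ← Finset.mul_sum]
  have h : ∀ (i₀ : Fin (n+2)) (r : Vc d), (∑ i, ∑ a, if i = i₀ then lam * (r a * PD f x (eP i a))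
      else 0) = lam * ∑ a, r a * PD f x (eP i₀ a) := by
    intro i₀ r
    rw [Finset.sum_comm, Finset.mul_sum]
    simp
  rw [h, h]
  ring

theorem Vtot_PD (U1 U2 : Vc d → ℝ) (hU1 : ContDiff ℝ (⊤ : ℕ∞) U1)
    (hU2 : ContDiff ℝ (⊤ : ℕ∞) U2) (q w : Cfg (n+2) d) :
    fderiv ℝ (Vtot U1 U2) q w = (∑ i, fderiv ℝ U1 (q i) (w i)) +
      ∑ i : Fin (n+1), fderiv ℝ U2 (q i.castSucc - q i.succ) (w i.castSucc - w i.succ) := by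
  have d1 : Differentiable ℝ U1 := hU1.differentiable (by simp)
  have d2 : Differentiable ℝ U2 := hU2.differentiable (by simp)
  refine line_deriv _ _ _ ?_ _ ?_
  · unfold Vtot
    fun_prop
  · unfold Vtot
    refine HasDerivAt.fun_add (HasDerivAt.fun_sum fun i _ => ?_) (HasDerivAt.fun_sum fun i _ => ?_)
    · exact line_comp U1 d1 (ContinuousLinearMap.proj (R := ℝ) (φ := fun _ : Fin (n+2) => Vc d) i) q w
    · exact line_comp U2 d2 (ContinuousLinearMap.proj (R := ℝ) (φ := fun _ : Fin (n+2) => Vc d) i.castSucc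
        - ContinuousLinearMap.proj (R := ℝ) (φ := fun _ : Fin (n+2) => Vc d) i.succ) q w

theorem cN_lt (k : ℕ) (h : k < n + 2) (q : Cfg (n+2) d) : cN k q = q ⟨k, h⟩ := by
  unfold cN
  rw [dif_pos h]
  rfl

theorem Vtot_single (U1 U2 : Vc d → ℝ) (hU1 : ContDiff ℝ (⊤ : ℕ∞) U1)
    (hU2 : ContDiff ℝ (⊤ : ℕ∞) U2) (q : Cfg (n+2) d) (k : ℕ) (hk : k < n + 2) (v : Vc d) :
    fderiv ℝ (Vtot U1 U2) q (Pi.single ⟨k, hk⟩ v) = fderiv ℝ U1 (cN k q) v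
      - (if k = 0 then 0 else fderiv ℝ U2 (cN (k-1) q - cN k q) v)
      + (if k = n + 1 then 0 else fderiv ℝ U2 (cN k q - cN (k+1) q) v) := by
  rw [Vtot_PD U1 U2 hU1 hU2]
  simp only [map_sub, Finset.sum_sub_distrib]
  have e1 : (∑ i, fderiv ℝ U1 (q i) ((Pi.single ⟨k, hk⟩ v : Cfg (n+2) d) i))
      = fderiv ℝ U1 (cN k q) v := by
    rw [Finset.sum_eq_single ⟨k, hk⟩]
    · rw [cN_lt k hk, Pi.single_eq_same]
    · intro b _ hb
      rw [Pi.single_eq_of_ne hb, map_zero]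
    · simp
  have e2 : (∑ i : Fin (n+1), fderiv ℝ U2 (q i.castSucc - q i.succ)
      ((Pi.single ⟨k, hk⟩ v : Cfg (n+2) d) i.castSucc))
      = (if k = n + 1 then 0 else fderiv ℝ U2 (cN k q - cN (k+1) q) v) := by
    split_ifs with h
    · refine Finset.sum_eq_zero fun i _ => ?_
      rw [Pi.single_eq_of_ne, map_zero]
      intro h'
      have := congrArg Fin.val h'
      simp at this
      omega
    · rw [Finset.sum_eq_single ⟨k, by omega⟩]
      · rw [cN_lt k hk, cN_lt (k+1) (by omega)]
        simp
      · intro b _ hb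
        rw [Pi.single_eq_of_ne, map_zero]
        intro h'
        apply hb
        have := congrArg Fin.val h'
        ext
        simpa using this
      · simp
  have e3 : (∑ i : Fin (n+1), fderiv ℝ U2 (q i.castSucc - q i.succ)
      ((Pi.single ⟨k, hk⟩ v : Cfg (n+2) d) i.succ))
      = (if k = 0 then 0 else fderiv ℝ U2 (cN (k-1) q - cN k q) v) := by
    split_ifs with h
    · refine Finset.sum_eq_zero fun i _ => ?_
      rw [Pi.single_eq_of_ne, map_zero]
      intro h'
      have := congrArg Fin.val h'
      simp at this
      omega
    · obtain ⟨k, rfl⟩ : ∃ l, k = l + 1 := ⟨k - 1, by omega⟩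
      rw [Finset.sum_eq_single ⟨k, by omega⟩]
      · rw [cN_lt (k+1) hk, Nat.add_sub_cancel, cN_lt k (by omega)]
        simp
      · intro b _ hb
        rw [Pi.single_eq_of_ne, map_zero]
        intro h'
        apply hb
        have := congrArg Fin.val h'
        ext
        simpa using this
      · simp
  rw [e1, e2, e3]
  ring

theorem heatFlow_mid (lam : ℝ) (U2 : Vc d → ℝ) (j : ℕ) (h0 : j ≠ 0) (h1 : j ≠ n + 2)
    (x : Phs (n+2) d) :
    heatFlow lam U2 j x = (1/2) * fderiv ℝ U2 (cN (j-1) x.2.1 - cN j x.2.1)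
      (cN (j-1) x.1 + cN j x.1) := by
  unfold heatFlow
  rw [if_neg h0, if_neg h1, clm_sum, Finset.mul_sum]
  simp only [cfgNat_eq, Pi.add_apply]
  refine Finset.sum_congr rfl fun a _ => ?_
  ring

theorem dH_HW (lam : ℝ) (U1 U2 : Vc d → ℝ) (hU1 : ContDiff ℝ (⊤ : ℕ∞) U1)
    (hU2 : ContDiff ℝ (⊤ : ℕ∞) U2) (k : ℕ) (hk : k < n + 2) (x : Phs (n+2) d) :
    dH U1 U2 k x (HW lam U1 U2 x) = heatFlow lam U2 k x - heatFlow lam U2 (k+1) x := by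
  have hS : (∑ a, cN k x.1 a * cN k (HW lam U1 U2 x).1 a) =
      - fderiv ℝ U1 (cN k x.2.1) (cN k x.1)
      + (if k = 0 then 0 else fderiv ℝ U2 (cN (k-1) x.2.1 - cN k x.2.1) (cN k x.1))
      - (if k = n + 1 then 0 else fderiv ℝ U2 (cN k x.2.1 - cN (k+1) x.2.1) (cN k x.1))
      - (if k = 0 then lam * ∑ a, x.2.2.1 a * x.1 0 a else 0)
      - (if k = n+1 then lam * ∑ a, x.2.2.2 a * x.1 (Fin.last (n+1)) a else 0) := by
    have hc : ∀ a, cN k (HW lam U1 U2 x).1 a = - (fderiv ℝ U1 (cN k x.2.1) (Pi.single a 1)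
      - (if k = 0 then 0 else fderiv ℝ U2 (cN (k-1) x.2.1 - cN k x.2.1) (Pi.single a 1))
      + (if k = n + 1 then 0 else fderiv ℝ U2 (cN k x.2.1 - cN (k+1) x.2.1) (Pi.single a 1)))
      - (if k = 0 then lam * x.2.2.1 a else 0)
      - (if k = n + 1 then lam * x.2.2.2 a else 0) := by
      intro a
      rw [cN_lt k hk, ← Vtot_single U1 U2 hU1 hU2 _ k hk]
      have z0 : ((⟨k, hk⟩ : Fin (n+2)) = 0) = (k = 0) := by
        rw [Fin.ext_iff]
        rfl
      have z1 : ((⟨k, hk⟩ : Fin (n+2)) = Fin.last (n+1)) = (k = n + 1) := by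
        rw [Fin.ext_iff]
        rfl
      simp only [HW, z0, z1]
    simp only [hc]
    rw [clm_sum (fderiv ℝ U1 (cN k x.2.1)), clm_sum (fderiv ℝ U2 (cN (k-1) x.2.1 - cN k x.2.1)),
      clm_sum (fderiv ℝ U2 (cN k x.2.1 - cN (k+1) x.2.1))]
    have p0 : k = 0 → cN k x.1 = x.1 0 := by
      rintro rfl
      exact cN_lt 0 hk _
    have p1 : k = n + 1 → cN k x.1 = x.1 (Fin.last (n+1)) := by
      rintro rfl
      exact cN_lt _ hk _
    simp only [Finset.mul_sum]
    by_cases h0 : k = 0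
    · by_cases h1 : k = n + 1
      · omega
      · simp only [if_pos h0, if_neg h1, ← p0 h0, ← Finset.sum_neg_distrib,
          ← Finset.sum_sub_distrib, ← Finset.sum_add_distrib, add_zero, sub_zero]
        exact Finset.sum_congr rfl fun a _ => by ring
    · by_cases h1 : k = n + 1
      · simp only [if_neg h0, if_pos h1, ← p1 h1, ← Finset.sum_neg_distrib,
          ← Finset.sum_sub_distrib, ← Finset.sum_add_distrib, add_zero, sub_zero]
        exact Finset.sum_congr rfl fun a _ => by ring
      · simp only [if_neg h0, if_neg h1, ← Finset.sum_neg_distrib,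
          ← Finset.sum_sub_distrib, ← Finset.sum_add_distrib, add_zero, sub_zero]
        exact Finset.sum_congr rfl fun a _ => by ring
  unfold dH
  rw [hS]
  have hq : (HW lam U1 U2 x).2.1 = x.1 := rfl
  rw [hq]
  by_cases h0 : k = 0
  · have h1 : k ≠ n + 1 := by omega
    rw [heatFlow_mid lam U2 (k+1) (by omega) (by omega)]
    simp only [if_pos h0, if_neg h1, heatFlow, map_sub, map_add, Nat.add_sub_cancel]
    ring
  · rw [heatFlow_mid lam U2 k h0 (by omega)]
    by_cases h1 : k = n + 1
    · simp only [if_neg h0, if_pos h1, heatFlow, map_sub, map_add]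
      rw [if_neg (by omega), if_pos (by omega)]
      ring
    · rw [heatFlow_mid lam U2 (k+1) (by omega) (by omega)]
      simp only [if_neg h0, if_neg h1, map_sub, map_add, Nat.add_sub_cancel]
      ring

theorem Rj_HW (lam T1 Tn : ℝ) (U1 U2 : Vc d → ℝ) (hU1 : ContDiff ℝ (⊤ : ℕ∞) U1)
    (hU2 : ContDiff ℝ (⊤ : ℕ∞) U2) (j : ℕ) (hj : j ≤ n + 2) (x : Phs (n+2) d) :
    PD (Rj T1 Tn U1 U2 j) x (HW lam U1 U2 x) = sigmaEP lam T1 Tn U2 j x := by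
  rw [Rj_PD T1 Tn U1 U2 hU1 hU2]
  have s1 : (∑ k ∈ Finset.range j, dH U1 U2 k x (HW lam U1 U2 x))
      = heatFlow lam U2 0 x - heatFlow lam U2 j x := by
    rw [← Finset.sum_range_sub' (fun k => heatFlow lam U2 k x)]
    exact Finset.sum_congr rfl fun k hk => dH_HW lam U1 U2 hU1 hU2 k
      (by have := Finset.mem_range.1 hk; omega) x
  have s2 : (∑ k ∈ Finset.Ico j (n+2), dH U1 U2 k x (HW lam U1 U2 x))
      = heatFlow lam U2 j x - heatFlow lam U2 (n+2) x := by
    have e : (∑ k ∈ Finset.range (n+2), dH U1 U2 k x (HW lam U1 U2 x))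
      = heatFlow lam U2 0 x - heatFlow lam U2 (n+2) x := by
      rw [← Finset.sum_range_sub' (fun k => heatFlow lam U2 k x)]
      exact Finset.sum_congr rfl fun k hk => dH_HW lam U1 U2 hU1 hU2 k
        (by have := Finset.mem_range.1 hk; omega) x
    rw [Finset.sum_Ico_eq_sub _ hj, e, s1]
    ring
  rw [s1, s2]
  have t1 : (∑ a, x.2.2.1 a * (HW lam U1 U2 x).2.2.1 a) = - heatFlow lam U2 0 x := by
    simp only [heatFlow, HW, if_true, Finset.mul_sum, ← Finset.sum_neg_distrib, Pi.smul_apply,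
      smul_eq_mul]
    exact Finset.sum_congr rfl fun a _ => by ring
  have t2 : (∑ a, x.2.2.2 a * (HW lam U1 U2 x).2.2.2 a) = heatFlow lam U2 (n+2) x := by
    simp only [heatFlow, HW, if_true, Finset.mul_sum, Pi.smul_apply,
      smul_eq_mul]
    rw [if_neg (by omega)]
    exact Finset.sum_congr rfl fun a _ => by ring
  rw [t1, t2]
  unfold sigmaEP
  ring

theorem PD_conj (α : ℝ) (R f : Phs (n+2) d → ℝ) (x v : Phs (n+2) d)
    (hR : DifferentiableAt ℝ R x) (hf : DifferentiableAt ℝ f x) :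
    PD (fun z => Real.exp (-α * R z) * f z) x v
      = Real.exp (-α * R x) * (PD f x v - α * PD R x v * f x) := by
  have h := (((hR.hasFDerivAt.const_mul (-α)).exp).mul hf.hasFDerivAt).fderiv
  unfold PD
  erw [h]
  simp
  ring

theorem PD2_conj (α c : ℝ) (R f : Phs (n+2) d → ℝ) (x e : Phs (n+2) d)
    (ℓ : Phs (n+2) d →L[ℝ] ℝ) (he : ℓ e = 1)
    (hR : Differentiable ℝ R) (hf : ContDiff ℝ (⊤ : ℕ∞) f) (h : ∀ y, PD R y e = c * ℓ y) :
    PD (fun y => PD (fun z => Real.exp (-α * R z) * f z) y e) x e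
      = Real.exp (-α * R x) * (PD (fun y => PD f y e) x e - 2 * α * c * (ℓ x * PD f x e)
        + α ^ 2 * c ^ 2 * (ℓ x) ^ 2 * f x - α * c * f x) := by
  have df : Differentiable ℝ f := hf.differentiable (by simp)
  have d2 : Differentiable ℝ (fun y => PD f y e) := by
    unfold PD
    have : ContDiff ℝ 1 (fderiv ℝ f) := hf.fderiv_right (by norm_cast)
    exact (this.differentiable (by simp)).clm_apply (differentiable_const _)
  have e1 : (fun y => PD (fun z => Real.exp (-α * R z) * f z) y e)
      = fun y => Real.exp (-α * R y) * (PD f y e - α * c * (ℓ y * f y)) := by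
    funext y
    rw [PD_conj α R f y e (hR y) (df y), h]
    ring
  rw [e1, PD_conj α R (fun y => PD f y e - α * c * (ℓ y * f y)) x e (hR x) (by fun_prop), h]
  have e2 : PD (fun y => PD f y e - α * c * (ℓ y * f y)) x e
      = PD (fun y => PD f y e) x e - α * c * (ℓ x * PD f x e + f x) := by
    have := ((d2 x).hasFDerivAt.sub ((ℓ.hasFDerivAt.mul (df x).hasFDerivAt).const_mul (α * c))).fderiv
    conv_lhs => unfold PD
    erw [this]
    simp [he]
    unfold PD
    ring
  rw [e2]
  ring

/-- for every j ∈ {0,…,n+2}, α ∈ ℝ and smooth f one has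
`(L − ασ_j) f = e^{αR_j} L̄_α (e^{−αR_j} f)`; in particular all the operators
`L − ασ_j` are conjugate to the same operator `L̄_α`, which does not depend on j. -/
theorem stmt4 (n d : ℕ) (hd : 1 ≤ d) (γ lam T1 Tn : ℝ)
    (hγ : 0 < γ) (hlam : 0 < lam) (hT1 : 0 < T1) (hTn : 0 < Tn)
    (U1 U2 : Vc d → ℝ) (hU1 : ContDiff ℝ (⊤ : ℕ∞) U1) (hU2 : ContDiff ℝ (⊤ : ℕ∞) U2) :
    ∀ j : ℕ, j ≤ n + 2 → ∀ α : ℝ, ∀ f : Phs (n+2) d → ℝ, ContDiff ℝ (⊤ : ℕ∞) f →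
      ∀ x : Phs (n+2) d,
        gen γ lam T1 Tn U1 U2 f x - α * sigmaEP lam T1 Tn U2 j x * f x
          = Real.exp (α * Rj T1 Tn U1 U2 j x)
              * barL γ lam T1 Tn U1 U2 α
                  (fun z => Real.exp (- α * Rj T1 Tn U1 U2 j z) * f z) x := by
  intro j hj α f hf x
  have hR := (Rj_contDiff (n := n) T1 Tn U1 U2 hU1 hU2 j).differentiable (by simp)
  have df : Differentiable ℝ f := hf.differentiable (by simp)
  have hE : Real.exp (α * Rj T1 Tn U1 U2 j x) * Real.exp (-α * Rj T1 Tn U1 U2 j x) = 1 := by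
    rw [← Real.exp_add]
    simp
  unfold barL
  rw [gen_eq, gen_eq]
  have c1 : ∀ v, PD (fun z => Real.exp (- α * Rj T1 Tn U1 U2 j z) * f z) x v
      = Real.exp (-α * Rj T1 Tn U1 U2 j x) * (PD f x v - α * PD (Rj T1 Tn U1 U2 j) x v * f x) :=
    fun v => PD_conj α _ f x v (hR x) (df x)
  have c2 : ∀ a, PD (fun y => PD (fun z => Real.exp (- α * Rj T1 Tn U1 U2 j z) * f z) y (eR1 a))
      x (eR1 a) = _ := fun a =>
    PD2_conj α (1/T1) (Rj T1 Tn U1 U2 j) f x (eR1 a)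
      ((ContinuousLinearMap.proj (R := ℝ) (φ := fun _ : Fin d => ℝ) a).comp
        ((ContinuousLinearMap.fst ℝ (Vc d) (Vc d)).comp
          ((ContinuousLinearMap.snd ℝ (Cfg (n+2) d) (Vc d × Vc d)).comp
            (ContinuousLinearMap.snd ℝ (Cfg (n+2) d) (Cfg (n+2) d × Vc d × Vc d)))))
      (by simp [eR1]) hR hf (fun y => Rj_PD_R1 T1 Tn U1 U2 hU1 hU2 j y a)
  have c3 : ∀ a, PD (fun y => PD (fun z => Real.exp (- α * Rj T1 Tn U1 U2 j z) * f z) y (eRn a))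
      x (eRn a) = _ := fun a =>
    PD2_conj α (1/Tn) (Rj T1 Tn U1 U2 j) f x (eRn a)
      ((ContinuousLinearMap.proj (R := ℝ) (φ := fun _ : Fin d => ℝ) a).comp
        ((ContinuousLinearMap.snd ℝ (Vc d) (Vc d)).comp
          ((ContinuousLinearMap.snd ℝ (Cfg (n+2) d) (Vc d × Vc d)).comp
            (ContinuousLinearMap.snd ℝ (Cfg (n+2) d) (Cfg (n+2) d × Vc d × Vc d)))))
      (by simp [eRn]) hR hf (fun y => Rj_PD_Rn T1 Tn U1 U2 hU1 hU2 j y a)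
  simp only [c1, c2, c3, Rj_PD_R1 T1 Tn U1 U2 hU1 hU2, Rj_PD_Rn T1 Tn U1 U2 hU1 hU2,
    Rj_HW lam T1 Tn U1 U2 hU1 hU2 j hj]
  simp only [ContinuousLinearMap.comp_apply, ContinuousLinearMap.coe_fst',
    ContinuousLinearMap.coe_snd', ContinuousLinearMap.proj_apply]
  generalize Real.exp (-α * Rj T1 Tn U1 U2 j x) = E at *
  generalize Real.exp (α * Rj T1 Tn U1 U2 j x) = F at *
  have a1 : ∀ (T : ℝ) (r D D2 : Fin d → ℝ), ∑ a, E * (D2 a - 2 * α * (1 / T) * (r a * D a)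
      + α ^ 2 * (1 / T) ^ 2 * r a ^ 2 * f x - α * (1 / T) * f x)
      = E * (∑ a, D2 a - 2 * α * (1/T) * ∑ a, r a * D a
        + α ^ 2 * (1/T)^2 * (∑ a, r a ^ 2) * f x - d * (α * (1/T) * f x)) := by
    intro T r D D2
    simp only [← Finset.mul_sum, Finset.sum_sub_distrib, Finset.sum_add_distrib, ← Finset.sum_mul]
    simp
    left
    ring
  have a2 : ∀ (T : ℝ) (r D : Fin d → ℝ), ∑ a, r a * (E * (D a - α * (1 / T * r a) * f x))
      = E * (∑ a, r a * D a - α * (1/T) * (∑ a, r a ^ 2) * f x) := by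
    intro T r D
    simp only [mul_sub, Finset.sum_sub_distrib, Finset.mul_sum, Finset.sum_mul]
    congr 1 <;> exact Finset.sum_congr rfl fun a _ => by ring
  rw [a1, a1, a2, a2]
  have hFE : F = E⁻¹ := eq_inv_of_mul_eq_one_left hE
  have hE0 : E ≠ 0 := right_ne_zero_of_mul_eq_one hE
  rw [hFE]
  field_simp
  ring

end
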